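/- arXiv:1910.00160 — 4 statements merged into one kernel-verified Lean document; each statement's English description precedes it below -/
import Mathlib

section
/- Let G be a finite group and N a subgroup of G. If every subgroup of G whose order divides |N| is contained in N, then for every subgroup H of G one has |H ∩ N| = gcd(|H|, |N|). -/
/-!
`|H ∩ N|` always divides `gcd(|H|, |N|)`. Conversely, if a prime power `q` divides the gcd, then
Sylow's theorem gives a subgroup of `H` of order `q`; as `q` divides `|N|`, it lies in `H ∩ N`,
so `q` divides `|H ∩ N|` by Lagrange.
-/

theorem dvd_of_forall_isPrimePow_dvd {m n : ℕ} (h : ∀ q, IsPrimePow q → q ∣ m → q ∣ n) :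
    m ∣ n := by
  refine (Nat.dvd_iff_prime_pow_dvd_dvd n m).mpr fun p k hp hpk ↦ ?_
  rcases eq_or_ne k 0 with rfl | hk
  · exact one_dvd n
  · exact h (p ^ k) (hp.isPrimePow.pow hk) hpk

section Subgroup

variable {G : Type*} [Group G]

theorem exists_subgroup_le_card_eq_of_isPrimePow_of_dvd {H : Subgroup G} [Finite H] {q : ℕ}
    (hq : IsPrimePow q) (hqH : q ∣ Nat.card H) : ∃ P ≤ H, Nat.card P = q := by
  obtain ⟨p, k, hp, -, rfl⟩ := (isPrimePow_nat_iff q).mp hq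
  have : Fact p.Prime := ⟨hp⟩
  obtain ⟨P, hP⟩ := Sylow.exists_subgroup_card_pow_prime p hqH
  exact ⟨P.map H.subtype, Subgroup.map_subtype_le P,
    (Subgroup.card_map_of_injective H.subtype_injective).trans hP⟩

theorem dvd_card_of_forall_isPrimePow_card_le {H K : Subgroup G} [Finite H] {m : ℕ}
    (hm : m ∣ Nat.card H)
    (h : ∀ P ≤ H, IsPrimePow (Nat.card P) → Nat.card P ∣ m → P ≤ K) : m ∣ Nat.card K := by
  refine dvd_of_forall_isPrimePow_dvd fun q hq hqm ↦ ?_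
  obtain ⟨P, hPH, rfl⟩ := exists_subgroup_le_card_eq_of_isPrimePow_of_dvd hq (hqm.trans hm)
  exact Subgroup.card_dvd_of_le (h P hPH hq hqm)

theorem card_inf_dvd_gcd_card (H K : Subgroup G) :
    Nat.card (H ⊓ K : Subgroup G) ∣ (Nat.card H).gcd (Nat.card K) :=
  Nat.dvd_gcd (Subgroup.card_dvd_of_le inf_le_left) (Subgroup.card_dvd_of_le inf_le_right)

theorem card_inf_eq_gcd_of_subgroups_le_general (H N : Subgroup G) [Finite H] [Finite N]
    (h : ∀ P ≤ H, IsPrimePow (Nat.card P) → Nat.card P ∣ Nat.card N → P ≤ N) :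
    Nat.card (H ⊓ N : Subgroup G) = (Nat.card H).gcd (Nat.card N) := by
  refine Nat.dvd_antisymm (card_inf_dvd_gcd_card H N) ?_
  refine dvd_card_of_forall_isPrimePow_card_le (Nat.gcd_dvd_left _ _) fun P hPH hP hPgcd ↦ ?_
  exact le_inf hPH (h P hPH hP (hPgcd.trans (Nat.gcd_dvd_right _ _)))

end Subgroup

theorem card_inf_eq_gcd_of_subgroups_le {G : Type*} [Group G] [Finite G] (N : Subgroup G)
    (h : ∀ H : Subgroup G, Nat.card H ∣ Nat.card N → H ≤ N) :
    ∀ H : Subgroup G, Nat.card (H ⊓ N : Subgroup G) = Nat.gcd (Nat.card H) (Nat.card N) :=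
  fun H ↦ card_inf_eq_gcd_of_subgroups_le_general H N fun P _ _ hPN ↦ h P hPN
end

section
/- Let G be a finite group and N a subgroup of G such that for every subgroup H of G, |H ∩ N| = gcd(|H|, |N|). Then N is a normal subgroup of G. -/
theorem le_of_card_inf_eq_gcd {G : Type*} [Group G] {H N : Subgroup G} [Finite H]
    (hgcd : Nat.card (H ⊓ N : Subgroup G) = Nat.gcd (Nat.card H) (Nat.card N))
    (hdvd : Nat.card H ∣ Nat.card N) : H ≤ N := by
  have hcard : Nat.card (H ⊓ N : Subgroup G) = Nat.card H :=
    hgcd.trans (Nat.gcd_eq_left hdvd)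
  exact inf_eq_left.mp (Subgroup.eq_of_le_of_card_ge inf_le_left hcard.ge)

theorem mem_iff_orderOf_dvd_card_of_card_inf_eq_gcd {G : Type*} [Group G] {N : Subgroup G}
    [Finite N]
    (h : ∀ H : Subgroup G, [Finite H] → [IsCyclic H] →
      Nat.card (H ⊓ N : Subgroup G) = Nat.gcd (Nat.card H) (Nat.card N))
    {x : G} : x ∈ N ↔ orderOf x ∣ Nat.card N := by
  refine ⟨N.orderOf_dvd_natCard, fun hdvd => ?_⟩
  have hx : IsOfFinOrder x := orderOf_pos_iff.mp (Nat.pos_of_dvd_of_pos hdvd Nat.card_pos)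
  have : Finite (Subgroup.zpowers x) := hx.finite_zpowers
  exact Subgroup.zpowers_le.mp
    (le_of_card_inf_eq_gcd (h (Subgroup.zpowers x)) ((Nat.card_zpowers x).symm ▸ hdvd))

theorem normal_of_gcd_property_general {G : Type*} [Group G] (N : Subgroup G) [Finite N]
    (h : ∀ H : Subgroup G, [Finite H] → [IsCyclic H] →
      Nat.card (H ⊓ N : Subgroup G) = Nat.gcd (Nat.card H) (Nat.card N)) :
    N.Characteristic := by
  refine ⟨fun φ => Subgroup.ext fun x => ?_⟩
  calc φ x ∈ N ↔ orderOf (φ x) ∣ Nat.card N := mem_iff_orderOf_dvd_card_of_card_inf_eq_gcd h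
    _ ↔ orderOf x ∣ Nat.card N := by rw [φ.orderOf_eq]
    _ ↔ x ∈ N := (mem_iff_orderOf_dvd_card_of_card_inf_eq_gcd h).symm

theorem normal_of_gcd_property {G : Type*} [Group G] [Finite G] (N : Subgroup G)
    (h : ∀ H : Subgroup G, Nat.card (H ⊓ N : Subgroup G) = Nat.gcd (Nat.card H) (Nat.card N)) :
    N.Normal := by
  have : N.Characteristic := normal_of_gcd_property_general N fun H => h H
  exact N.normal_of_characteristic
end

section
/- Let G be a finite group and N a normal subgroup of G. Suppose that for each prime p dividing |G| one of the following holds: (i) |N|_p = 1; (ii) |N|_p = |G|_p; (iii) the Sylow p-subgroups of G are cyclic, or they are generalized quaternion groups and |N|_2 = 2. Then G and N satisfy the gcd property, i.e., for every subgroup H of G, |H ∩ N| = gcd(|H|, |N|). -/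
/-- A group is generalized quaternion if it is isomorphic to a dicyclic group of order `2 ^ n`
for some `n ≥ 3`, i.e. to `QuaternionGroup (2 ^ (n - 2))`. -/
def IsGeneralizedQuaternion (Q : Type*) [Group Q] : Prop :=
  ∃ n : ℕ, 3 ≤ n ∧ Nonempty (Q ≃* QuaternionGroup (2 ^ (n - 2)))

/-!
It suffices that `N` contains every subgroup of prime power order `p ^ k` dividing `|N|`: if
`p ^ k` also divides `|H|`, then `H` has a subgroup of order `p ^ k`, which lies in `H ⊓ N`.
If `|N|_p = |G|_p`, this containment holds because `G ⧸ N` has order prime to `p`.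
If a Sylow `p`-subgroup has at most one subgroup of order `p ^ k`, then all subgroups of `G` of
order `p ^ k` are conjugate, and the normal subgroup `N` contains one of them, hence all. This
covers cyclic Sylow subgroups, and generalized quaternion ones for `p ^ k = 2`, since they have a
unique involution.
-/

section UniqueSubgroup

variable {Q : Type*} [Group Q]

theorem subsingleton_subgroup_card_eq_of_encard_pow_eq_one_le {n : ℕ}
    (hn : {x : Q | x ^ n = 1}.encard ≤ n) : {A : Subgroup Q | Nat.card A = n}.Subsingleton := by
  have coe_eq (A : Subgroup Q) (hA : Nat.card A = n) : (A : Set Q) = {x | x ^ n = 1} := by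
    have hfin : {x : Q | x ^ n = 1}.Finite := Set.finite_of_encard_le_coe hn
    have hsub : (A : Set Q) ⊆ {x | x ^ n = 1} := fun x hx ↦
      orderOf_dvd_iff_pow_eq_one.mp (hA ▸ A.orderOf_dvd_natCard hx)
    refine (hfin.subset hsub).eq_of_subset_of_encard_le hsub (hn.trans_eq ?_)
    rw [← (hfin.subset hsub).cast_ncard_eq, ← Nat.card_coe_set_eq, SetLike.coe_sort_coe, hA]
  exact fun A hA B hB ↦ SetLike.coe_injective ((coe_eq A hA).trans (coe_eq B hB).symm)

theorem subsingleton_subgroup_card_eq_of_isCyclic [Finite Q] [IsCyclic Q] (n : ℕ) :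
    {A : Subgroup Q | Nat.card A = n}.Subsingleton := by
  classical
  rcases n.eq_zero_or_pos with rfl | hn
  · exact fun A hA ↦ (Nat.card_pos.ne' hA).elim
  · have := Fintype.ofFinite Q
    refine subsingleton_subgroup_card_eq_of_encard_pow_eq_one_le ?_
    rw [Set.encard_eq_coe_toFinset_card, Set.toFinset_ofFinset]
    exact Nat.cast_le.mpr (IsCyclic.card_pow_eq_one_le hn)

theorem quaternionGroup_eq_one_or_eq_a_of_sq_eq_one {n : ℕ} [NeZero n] {x : QuaternionGroup n}
    (hx : x ^ 2 = 1) : x = 1 ∨ x = .a n := by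
  rcases x with i | i
  · have hi : -i = i := by
      rwa [sq, QuaternionGroup.a_mul_a, QuaternionGroup.one_def, QuaternionGroup.a.injEq,
        ← neg_eq_iff_add_eq_zero] at hx
    refine ((ZMod.neg_eq_self_iff i).mp hi).imp (congrArg _) fun hval ↦ congrArg _ ?_
    rw [← i.natCast_zmod_val, Nat.eq_of_mul_eq_mul_left two_pos hval]
  · have := orderOf_dvd_of_pow_eq_one hx
    norm_num [QuaternionGroup.orderOf_xa] at this

namespace IsGeneralizedQuaternion

theorem subsingleton_subgroup_card_eq_two (hQ : IsGeneralizedQuaternion Q) :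
    {A : Subgroup Q | Nat.card A = 2}.Subsingleton := by
  obtain ⟨n, -, ⟨e⟩⟩ := hQ
  refine subsingleton_subgroup_card_eq_of_encard_pow_eq_one_le ?_
  have image_subset : e '' {x | x ^ 2 = 1} ⊆ {1, .a (2 ^ (n - 2) : ℕ)} := by
    rintro _ ⟨x, hx, rfl⟩
    refine quaternionGroup_eq_one_or_eq_a_of_sq_eq_one ?_
    rw [← map_pow, hx, map_one]
  calc {x : Q | x ^ 2 = 1}.encard
    _ = (e '' {x | x ^ 2 = 1}).encard := (e.injective.encard_image _).symm
    _ ≤ ({1, .a (2 ^ (n - 2) : ℕ)} : Set (QuaternionGroup _)).encard :=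
      Set.encard_le_encard image_subset
    _ ≤ 2 := (Set.encard_insert_le _ _).trans_eq
      (by rw [Set.encard_singleton, one_add_one_eq_two])

theorem eq_two_of_isPGroup {p : ℕ} (hQ : IsGeneralizedQuaternion Q) (hp : p.Prime)
    (hpQ : IsPGroup p Q) : p = 2 := by
  obtain ⟨n, -, ⟨e⟩⟩ := hQ
  have := Fact.mk hp
  obtain ⟨k, hk⟩ := IsPGroup.iff_orderOf.mp hpQ (e.symm (.xa 0))
  rw [MulEquiv.orderOf_eq, QuaternionGroup.orderOf_xa] at hk
  exact (Nat.prime_eq_prime_of_dvd_pow Nat.prime_two hp (hk ▸ by norm_num : 2 ∣ p ^ k)).symm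

end IsGeneralizedQuaternion

end UniqueSubgroup

section Containment

open scoped Pointwise

variable {G : Type*} [Group G] {N : Subgroup G} {p k : ℕ}

theorem le_of_coprime_card_index [N.Normal] {A : Subgroup G}
    (h : (Nat.card A).Coprime N.index) : A ≤ N :=
  Subgroup.relIndex_eq_one.mp <|
    Nat.eq_one_of_dvd_coprimes h (N.relIndex_dvd_card A) (N.relIndex_dvd_index_of_normal A)

theorem not_dvd_index_of_factorization_card_eq [Finite G] (hp : p.Prime)
    (h : (Nat.card N).factorization p = (Nat.card G).factorization p) : ¬ p ∣ N.index := by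
  intro hdvd
  have hpos := hp.factorization_pos_of_dvd N.index_ne_zero_of_finite hdvd
  rw [← N.card_mul_index, Nat.factorization_mul Nat.card_pos.ne' N.index_ne_zero_of_finite,
    Finsupp.add_apply] at h
  lia

theorem exists_conj_smul_le_sylow [Fact p.Prime] [Finite (Sylow p G)] (P : Sylow p G)
    {A : Subgroup G} (hA : IsPGroup p A) : ∃ g : G, MulAut.conj g • A ≤ P := by
  obtain ⟨R, hAR⟩ := hA.exists_le_sylow
  obtain ⟨g, rfl⟩ := MulAction.exists_smul_eq G R P
  exact ⟨g, Subgroup.pointwise_smul_le_pointwise_smul_iff.mpr hAR⟩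

theorem exists_conj_smul_eq_of_card_eq [Fact p.Prime] [Finite (Sylow p G)] (P : Sylow p G)
    (hP : {A : Subgroup P | Nat.card A = p ^ k}.Subsingleton) {A B : Subgroup G}
    (hA : Nat.card A = p ^ k) (hB : Nat.card B = p ^ k) : ∃ g : G, MulAut.conj g • B = A := by
  obtain ⟨a, haP⟩ := exists_conj_smul_le_sylow P (IsPGroup.of_card hA)
  obtain ⟨b, hbP⟩ := exists_conj_smul_le_sylow P (IsPGroup.of_card hB)
  have card_subgroupOf {C : Subgroup G} (hC : Nat.card C = p ^ k) {c : G}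
      (hcP : MulAut.conj c • C ≤ P) : Nat.card ((MulAut.conj c • C).subgroupOf P) = p ^ k := by
    rw [Nat.card_congr (Subgroup.subgroupOfEquivOfLe hcP).toEquiv,
      ← Nat.card_congr (Subgroup.equivSMul (MulAut.conj c) C).toEquiv, hC]
  have heq : MulAut.conj b • B = MulAut.conj a • A := by
    have := hP (card_subgroupOf hB hbP) (card_subgroupOf hA haP)
    rwa [Subgroup.subgroupOf_inj, inf_eq_left.mpr hbP, inf_eq_left.mpr haP] at this
  exact ⟨a⁻¹ * b, by rw [map_mul, map_inv, mul_smul, heq, inv_smul_smul]⟩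

theorem exists_le_card_eq_prime_pow [Fact p.Prime] {K : Subgroup G} [Finite K]
    (hK : p ^ k ∣ Nat.card K) : ∃ A ≤ K, Nat.card A = p ^ k := by
  obtain ⟨A, hA⟩ := Sylow.exists_subgroup_card_pow_prime p hK
  exact ⟨A.map K.subtype, Subgroup.map_subtype_le A,
    (Subgroup.card_map_of_injective K.subtype_injective).trans hA⟩

theorem le_of_subsingleton_subgroup_sylow [Fact p.Prime] [Finite (Sylow p G)] [N.Normal]
    [Finite N] (P : Sylow p G) (hP : {A : Subgroup P | Nat.card A = p ^ k}.Subsingleton)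
    (hN : p ^ k ∣ Nat.card N) {A : Subgroup G} (hA : Nat.card A = p ^ k) : A ≤ N := by
  obtain ⟨B, hBN, hB⟩ := exists_le_card_eq_prime_pow hN
  obtain ⟨g, rfl⟩ := exists_conj_smul_eq_of_card_eq P hP hA hB
  rw [← Subgroup.Normal.conj_smul_eq_self g N]
  exact Subgroup.pointwise_smul_le_pointwise_smul_iff.mpr hBN

theorem card_inf_eq_gcd_of_forall_prime_pow_card_le
    (hN : ∀ p k : ℕ, p.Prime → p ^ k ∣ Nat.card N →
      ∀ A : Subgroup G, Nat.card A = p ^ k → A ≤ N) (H : Subgroup G) [Finite H] :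
    Nat.card (H ⊓ N : Subgroup G) = Nat.gcd (Nat.card H) (Nat.card N) := by
  refine Nat.dvd_antisymm (Nat.dvd_gcd (Subgroup.card_dvd_of_le inf_le_left)
    (Subgroup.card_dvd_of_le inf_le_right)) ((Nat.dvd_iff_prime_pow_dvd_dvd _ _).mpr ?_)
  intro p k hp hpk
  have := Fact.mk hp
  obtain ⟨hkH, hkN⟩ := Nat.dvd_gcd_iff.mp hpk
  obtain ⟨A, hAH, hA⟩ := exists_le_card_eq_prime_pow hkH
  rw [← hA]
  exact Subgroup.card_dvd_of_le (le_inf hAH (hN p k hp hkN A hA))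

end Containment

theorem gcd_property_of_sylow_condition {G : Type*} [Group G] [Finite G] (N : Subgroup G)
    [N.Normal]
    (h : ∀ p : ℕ, p.Prime → p ∣ Nat.card G →
      (Nat.card N).factorization p = 0 ∨
      (Nat.card N).factorization p = (Nat.card G).factorization p ∨
      ((∀ P : Sylow p G, IsCyclic P) ∨
        ((∀ P : Sylow p G, IsGeneralizedQuaternion P) ∧ (Nat.card N).factorization 2 = 1))) :
    ∀ H : Subgroup G, Nat.card (H ⊓ N : Subgroup G) = Nat.gcd (Nat.card H) (Nat.card N) := by
  refine fun H ↦ card_inf_eq_gcd_of_forall_prime_pow_card_le (fun p k hp hkN A hA ↦ ?_) H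
  have := Fact.mk hp
  rcases eq_or_ne k 0 with rfl | hk
  · rw [Subgroup.card_eq_one.mp hA]
    exact bot_le
  have hk_le := (hp.pow_dvd_iff_le_factorization Nat.card_pos.ne').mp hkN
  have hpG : p ∣ Nat.card G := (dvd_pow_self p hk).trans (hkN.trans N.card_subgroup_dvd_card)
  let P : Sylow p G := default
  rcases h p hp hpG with hzero | hfull | hcyclic | ⟨hquaternion, htwo⟩
  · lia
  · have hindex := not_dvd_index_of_factorization_card_eq hp hfull
    exact le_of_coprime_card_index (hA ▸ (hp.coprime_iff_not_dvd.mpr hindex).pow_left k)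
  · have := hcyclic P
    exact le_of_subsingleton_subgroup_sylow P (subsingleton_subgroup_card_eq_of_isCyclic _)
      hkN hA
  · obtain rfl : p = 2 := (hquaternion P).eq_two_of_isPGroup hp P.isPGroup'
    obtain rfl : k = 1 := by lia
    exact le_of_subsingleton_subgroup_sylow P
      (hquaternion P).subsingleton_subgroup_card_eq_two hkN hA
end

section
/- Let p be a prime and Q a group of order p^n. Suppose that for some integer k with 0 < k < n, Q contains a unique subgroup of order p^k. Then Q is either cyclic or a generalized quaternion group; moreover, if Q is a generalized quaternion group and not cyclic, then p^k = 2. -/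
/-!
Passing from order `p ^ k` to order `p`: every subgroup of order at most `p ^ k` lies in the unique
subgroup `H` of order `p ^ k`, so the cyclic group generated by an element outside `H` has order
greater than `p ^ k` and contains `H`. Thus `H` is cyclic, which leaves room for only one subgroup
of order `p`, and, when `k ≥ 2`, would make any two elements of order `4` commute.

Suppose now that `G` is a finite `p`-group with at most one subgroup of order `p`. A maximal
commutative normal subgroup of `G` is cyclic, say `⟨g⟩`, and equals its own centralizer. If
`x ∉ ⟨g⟩`, `x ^ p = g ^ t` and `x` acts on `⟨g⟩` by `g ↦ g ^ r`, then `p ∣ t`, since otherwise `g`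
would be a power of `x`, and `(g ^ i * x) ^ p = g ^ (i * (1 + r + ⋯ + r ^ (p - 1)) + t)`. Were the
sum `p` times an integer prime to `p`, some `g ^ i * x ∉ ⟨g⟩` would have order `p`. As
`r ≡ 1 [ZMOD p]`, this forces `p = 2` and `r ≡ 3 [ZMOD 4]`. Then both `x` and `g * x` square to the
involution of `⟨g⟩`, so `r = -1` modulo the order of `g`. Finally `-1` is not a square modulo `4`,
so every element outside `⟨g⟩` inverts `g` and `⟨g⟩` has index two.
-/

open Subgroup
open scoped commutatorElement

section Nilpotent

variable {G : Type*} [Group G]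

theorem inf_center_ne_bot_of_isNilpotent [Group.IsNilpotent G] {N : Subgroup G} [N.Normal]
    (hN : N ≠ ⊥) : N ⊓ center G ≠ ⊥ := by
  classical
  have hex : ∃ i, N ⊓ Subgroup.upperCentralSeries G i ≠ ⊥ := by
    obtain ⟨i, hi⟩ := ‹Group.IsNilpotent G›.nilpotent'
    exact ⟨i, by simpa [hi] using hN⟩
  obtain ⟨i, hi⟩ : ∃ i, Nat.find hex = i + 1 :=
    Nat.exists_eq_succ_of_ne_zero fun h => Nat.find_spec hex (by simp [h])
  have hbot : N ⊓ Subgroup.upperCentralSeries G i = ⊥ := not_not.mp (Nat.find_min hex (by lia))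
  have hne := Nat.find_spec hex
  rw [hi] at hne
  refine ne_bot_of_le_ne_bot hne (le_inf inf_le_left fun x hx => mem_center_iff.mpr fun g => ?_)
  have hcomm : ⁅x, g⁆ ∈ N ⊓ Subgroup.upperCentralSeries G i :=
    ⟨commutator_le_left N ⊤ (commutator_mem_commutator hx.1 (mem_top g)),
      Subgroup.mem_upperCentralSeries_succ_iff.mp hx.2 g⟩
  rw [hbot, mem_bot, commutatorElement_eq_one_iff_mul_comm] at hcomm
  exact hcomm.symm

theorem normal_sup_zpowers_of_mk_mem_center {A : Subgroup G} [A.Normal] {x : G}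
    (hx : (x : G ⧸ A) ∈ center (G ⧸ A)) : (A ⊔ zpowers x).Normal := by
  have hnormal : (zpowers (x : G ⧸ A)).Normal :=
    ⟨fun y hy g => by
      rwa [mem_center_iff.mp (zpowers_le.mpr hx hy) g, mul_inv_cancel_right]⟩
  have hcomap : A ⊔ zpowers x = (zpowers (x : G ⧸ A)).comap (QuotientGroup.mk' A) := by
    rw [← QuotientGroup.mk'_apply, ← MonoidHom.map_zpowers, comap_map_eq, QuotientGroup.ker_mk',
      sup_comm]
  exact hcomap ▸ hnormal.comap _

theorem isMulCommutative_sup_zpowers_of_mem_centralizer {A : Subgroup G} [IsMulCommutative A]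
    {x : G} (hx : x ∈ centralizer (A : Set G)) : IsMulCommutative ↥(A ⊔ zpowers x) := by
  have hsup : A ⊔ zpowers x = Subgroup.closure (A ∪ {x}) := by
    rw [Subgroup.closure_union, closure_eq, zpowers_eq_closure]
  rw [mem_centralizer_iff] at hx
  rw [hsup]
  refine isMulCommutative_closure ?_
  rintro a (ha | rfl) b (hb | rfl)
  · exact setLike_mul_comm ha hb
  · exact hx a ha
  · exact (hx b hb).symm
  · rfl

theorem centralizer_le_of_maximal_normal_isMulCommutative [Group.IsNilpotent G] {A : Subgroup G}
    (hA : Maximal (fun B : Subgroup G => B.Normal ∧ IsMulCommutative B) A) :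
    centralizer (A : Set G) ≤ A := by
  have := hA.prop.1
  have := hA.prop.2
  by_contra hle
  have hne : (centralizer (A : Set G)).map (QuotientGroup.mk' A) ≠ ⊥ := by
    rwa [Ne, Subgroup.map_eq_bot_iff, QuotientGroup.ker_mk']
  have : ((centralizer (A : Set G)).map (QuotientGroup.mk' A)).Normal :=
    Normal.map inferInstance _ (QuotientGroup.mk'_surjective A)
  obtain ⟨_, ⟨⟨x, hxC, rfl⟩, hxZ⟩, hx⟩ :=
    (Subgroup.bot_or_exists_ne_one _).resolve_left (inf_center_ne_bot_of_isNilpotent hne)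
  refine hx ((QuotientGroup.eq_one_iff x).mpr ?_)
  exact hA.le_of_ge ⟨normal_sup_zpowers_of_mk_mem_center hxZ,
    isMulCommutative_sup_zpowers_of_mem_centralizer hxC⟩ le_sup_left
    (mem_sup_right (mem_zpowers x))

end Nilpotent

section PGroup

variable {G : Type*} [Group G] {p : ℕ}

theorem exists_pow_prime_pow_notMem_and_mem (hG : IsPGroup p G) {A : Subgroup G} {y : G}
    (hy : y ∉ A) : ∃ k : ℕ, y ^ p ^ k ∉ A ∧ y ^ p ^ (k + 1) ∈ A := by
  classical
  have hex : ∃ k, y ^ p ^ k ∈ A := by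
    obtain ⟨k, hk⟩ := isPGroup_iff_pow_pow_eq_one.mp hG y
    exact ⟨k, hk ▸ A.one_mem⟩
  obtain ⟨k, hk⟩ : ∃ k, Nat.find hex = k + 1 :=
    Nat.exists_eq_succ_of_ne_zero fun h => hy (by simpa [h] using Nat.find_spec hex)
  exact ⟨k, Nat.find_min hex (by lia), hk ▸ Nat.find_spec hex⟩

theorem mem_zpowers_of_pow_prime_eq_one [Fact p.Prime] (hG : IsPGroup p G)
    (huniq : {K : Subgroup G | Nat.card K = p}.Subsingleton) {g y : G} (hg : g ≠ 1)
    (hy : y ^ p = 1) : y ∈ zpowers g := by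
  rcases eq_or_ne y 1 with rfl | hy1
  · exact one_mem _
  have hp : p ≠ 0 := (Fact.out : p.Prime).ne_zero
  have hcard : Nat.card (zpowers (g ^ (orderOf g / p))) = p := by
    rw [Nat.card_zpowers,
      orderOf_pow_orderOf_div (hG.isOfFinOrder hp g).orderOf_pos.ne' (hG.dvd_orderOf hg)]
  have heq : zpowers y = zpowers (g ^ (orderOf g / p)) :=
    huniq (by rw [Set.mem_ofPred, Nat.card_zpowers, orderOf_eq_prime hy hy1]) hcard
  exact zpowers_le.mpr (pow_mem (mem_zpowers g) _) (heq ▸ mem_zpowers y)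

end PGroup

section CyclicExtension

variable {G : Type*} [Group G] {p k m : ℕ} {g x : G} {r t : ℤ}

theorem pow_semiconjBy_zpow_pow (hx : SemiconjBy x g (g ^ r)) (k : ℕ) :
    SemiconjBy (x ^ k) g (g ^ r ^ k) := by
  induction k with
  | zero => simp
  | succ k ih =>
    rw [pow_succ', pow_succ', zpow_mul]
    exact (hx.zpow_right _).mul_left ih

theorem zpow_mul_pow_of_semiconjBy_zpow (hx : SemiconjBy x g (g ^ r)) (i : ℤ) (k : ℕ) :
    (g ^ i * x) ^ k = g ^ (i * ∑ j ∈ Finset.range k, r ^ j) * x ^ k := by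
  induction k with
  | zero => simp
  | succ k ih =>
    have hmove : x * g ^ (i * ∑ j ∈ Finset.range k, r ^ j) =
        g ^ (r * (i * ∑ j ∈ Finset.range k, r ^ j)) * x := by
      rw [zpow_mul g r]
      exact hx.zpow_right _
    rw [pow_succ', ih, mul_assoc, ← mul_assoc x, hmove, pow_succ' x, mul_assoc, ← mul_assoc (g ^ i),
      ← zpow_add, geom_sum_succ]
    ring_nf

theorem mem_zpowers_of_pow_eq_zpow_of_not_dvd (hp : p.Prime) (hg : orderOf g = p ^ m)
    (hxk : x ^ k = g ^ t) (ht : ¬ (p : ℤ) ∣ t) : g ∈ zpowers x := by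
  have hcop : IsCoprime t (orderOf g : ℤ) := by
    rw [hg, Nat.cast_pow]
    exact ((Nat.prime_iff_prime_int.mp hp).coprime_iff_not_dvd.mpr ht).symm.pow_right
  have hmem : g ∈ zpowers (x ^ k) :=
    hxk ▸ mem_zpowers_zpow_iff.mpr (Int.isCoprime_iff_gcd_eq_one.mp hcop)
  exact zpowers_le.mpr (pow_mem (mem_zpowers x) k) hmem

theorem exists_zpow_mul_pow_eq_one {c : ℤ} (hg : orderOf g = p ^ m) (hx : SemiconjBy x g (g ^ r))
    (hxp : x ^ p = g ^ t) (ht : (p : ℤ) ∣ t)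
    (hsum : ∑ j ∈ Finset.range p, r ^ j = p * c) (hc : IsCoprime (p : ℤ) c) :
    ∃ i : ℤ, (g ^ i * x) ^ p = 1 := by
  obtain ⟨u, rfl⟩ := ht
  obtain ⟨a, b, hab⟩ := hc.pow_left (m := m)
  refine ⟨-(b * u), ?_⟩
  rw [zpow_mul_pow_of_semiconjBy_zpow hx, hxp, ← zpow_add, ← orderOf_dvd_iff_zpow_eq_one, hg, hsum]
  push_cast
  exact ⟨a * p * u, by linear_combination (-(p : ℤ) * u) * hab⟩

theorem mem_zpowers_of_geom_sum_eq_mul {c : ℤ} (hg : orderOf g = p ^ m)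
    (huniq : ∀ y : G, y ^ p = 1 → y ∈ zpowers g) (hx : SemiconjBy x g (g ^ r))
    (hxp : x ^ p = g ^ t) (ht : (p : ℤ) ∣ t)
    (hsum : ∑ j ∈ Finset.range p, r ^ j = p * c) (hc : IsCoprime (p : ℤ) c) : x ∈ zpowers g := by
  obtain ⟨i, hi⟩ := exists_zpow_mul_pow_eq_one hg hx hxp ht hsum hc
  exact (mul_mem_cancel_left (zpow_mem (mem_zpowers g) i)).mp (huniq _ hi)

theorem isCyclic_of_isMulCommutative_of_subsingleton_card_eq_prime [Finite G] [IsMulCommutative G]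
    [Fact p.Prime] (hG : IsPGroup p G)
    (huniq : {K : Subgroup G | Nat.card K = p}.Subsingleton) : IsCyclic G := by
  have hp : p.Prime := Fact.out
  obtain ⟨g, hmax⟩ := Finite.exists_max (orderOf : G → ℕ)
  refine ⟨g, fun y => by_contra fun hy => ?_⟩
  obtain ⟨k, hxg, hxp⟩ := exists_pow_prime_pow_notMem_and_mem (A := zpowers g) hG hy
  rw [pow_succ, pow_mul] at hxp
  generalize y ^ p ^ k = x at hxg hxp
  have hg : g ≠ 1 := by
    rintro rfl
    have hx1 : orderOf x = 1 := le_antisymm (orderOf_one (G := G) ▸ hmax x) (orderOf_pos x)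
    exact hxg (orderOf_eq_one_iff.mp hx1 ▸ one_mem (zpowers (1 : G)))
  obtain ⟨m, hm⟩ := IsPGroup.iff_orderOf.mp hG g
  obtain ⟨t, ht⟩ := mem_zpowers_iff.mp hxp
  have hcomm : SemiconjBy x g (g ^ (1 : ℤ)) := (zpow_one g).symm ▸ mul_comm' x g
  by_cases hpt : (p : ℤ) ∣ t
  · exact hxg (mem_zpowers_of_geom_sum_eq_mul hm
      (fun _ => mem_zpowers_of_pow_prime_eq_one hG huniq hg) hcomm ht.symm hpt
      (c := 1) (by simp) isCoprime_one_right)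
  · have hle : zpowers g ≤ zpowers x :=
      zpowers_le.mpr (mem_zpowers_of_pow_eq_zpow_of_not_dvd hp hm ht.symm hpt)
    have heq := eq_of_le_of_card_ge hle (by simpa only [Nat.card_zpowers] using hmax x)
    exact hxg (heq ▸ mem_zpowers x)

theorem prime_dvd_sub_one_of_pow_commute (hp : p.Prime) (hg : p ∣ orderOf g)
    (hx : SemiconjBy x g (g ^ r)) (hxp : Commute (x ^ p) g) : (p : ℤ) ∣ r - 1 := by
  have hfix : g ^ r ^ p = g ^ (1 : ℤ) := by
    rw [zpow_one]
    exact mul_right_cancel ((pow_semiconjBy_zpow_pow hx p).eq.symm.trans hxp.eq)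
  have hmod : r ^ p ≡ 1 [ZMOD p] :=
    (zpow_eq_zpow_iff_modEq.mp hfix).of_dvd (Int.natCast_dvd_natCast.mpr hg)
  exact ((Int.ModEq.pow_prime_eq_self hp r).symm.trans hmod).symm.dvd

theorem exists_isCoprime_geom_sum_eq_mul (hp : p.Prime) (hr : (p : ℤ) ∣ r - 1)
    (hr4 : p = 2 → ¬ (4 : ℤ) ∣ r + 1) :
    ∃ c : ℤ, IsCoprime (p : ℤ) c ∧ ∑ j ∈ Finset.range p, r ^ j = p * c := by
  rcases hp.eq_two_or_odd' with rfl | hodd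
  · have hpi : Prime (2 : ℤ) := Int.prime_two
    refine ⟨(r + 1) / 2, hpi.coprime_iff_not_dvd.mpr ?_, ?_⟩
    · grind
    · rw [geom_sum_two]
      grind
  · obtain ⟨b, hb⟩ := hr
    obtain ⟨c, hc⟩ := odd_sq_dvd_geom_sum₂_sub (R := ℤ) 1 b hodd
    simp only [← hb, add_sub_cancel, one_pow, mul_one] at hc
    exact ⟨1 + p * c, ⟨-c, 1, by ring⟩, by linear_combination hc⟩

theorem eq_two_and_four_dvd_of_not_commute (hp : p.Prime) (hg : orderOf g = p ^ m)
    (huniq : ∀ y : G, y ^ p = 1 → y ∈ zpowers g) (hx : SemiconjBy x g (g ^ r))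
    (hxp : x ^ p ∈ zpowers g) (hxg : ¬ Commute x g) : p = 2 ∧ (4 : ℤ) ∣ r + 1 := by
  have hcomm : ∀ {a b : G}, a ∈ zpowers b → Commute a b := by
    rintro _ b ⟨i, rfl⟩
    exact (Commute.refl b).zpow_left i
  obtain ⟨t, ht⟩ := mem_zpowers_iff.mp hxp
  have hpt : (p : ℤ) ∣ t := by_contra fun h =>
    hxg (hcomm (mem_zpowers_of_pow_eq_zpow_of_not_dvd hp hg ht.symm h)).symm
  have hpg : p ∣ orderOf g := by
    rw [hg]
    refine dvd_pow_self p fun hm => hxg ?_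
    rw [hm, pow_zero, orderOf_eq_one_iff] at hg
    exact hg ▸ Commute.one_right x
  have hpr := prime_dvd_sub_one_of_pow_commute hp hpg hx (hcomm hxp)
  by_contra h
  obtain ⟨c, hc, hsum⟩ := exists_isCoprime_geom_sum_eq_mul hp hpr fun h2 h4 => h ⟨h2, h4⟩
  exact hxg (hcomm (mem_zpowers_of_geom_sum_eq_mul hg huniq hx ht.symm hpt hsum hc))

theorem eq_pow_half_orderOf_of_sq_eq_one {w : G} (hw : w ∈ zpowers g) (hw2 : w ^ 2 = 1)
    (hw1 : w ≠ 1) : w = g ^ (orderOf g / 2) := by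
  obtain ⟨n, hn⟩ : 2 ∣ orderOf g :=
    orderOf_eq_prime hw2 hw1 ▸ orderOf_dvd_of_mem_zpowers hw
  obtain ⟨i, rfl⟩ := mem_zpowers_iff.mp hw
  have hdvd : (n : ℤ) ∣ i := by
    rw [← zpow_natCast, ← zpow_mul, ← orderOf_dvd_iff_zpow_eq_one, hn] at hw2
    push_cast at hw2
    exact Int.dvd_of_mul_dvd_mul_left two_ne_zero (mul_comm i 2 ▸ hw2)
  rw [Ne, ← orderOf_dvd_iff_zpow_eq_one, hn] at hw1
  rw [hn, Nat.mul_div_cancel_left n two_pos, ← zpow_natCast, zpow_eq_zpow_iff_modEq, hn]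
  obtain ⟨j, rfl⟩ := hdvd
  push_cast at hw1 ⊢
  have hj : ¬ (2 : ℤ) ∣ j := fun h => hw1 (mul_comm (2 : ℤ) n ▸ mul_dvd_mul_left _ h)
  obtain ⟨c, hc⟩ : (2 : ℤ) ∣ 1 - j := by lia
  exact Int.modEq_iff_dvd.mpr ⟨c, by linear_combination (n : ℤ) * hc⟩

theorem sq_eq_pow_half_orderOf_of_four_dvd (hg : orderOf g = 2 ^ m)
    (huniq : ∀ y : G, y ^ 2 = 1 → y ∈ zpowers g) (hx : SemiconjBy x g (g ^ r))
    (hr : (4 : ℤ) ∣ r + 1) (hx2 : x ^ 2 ∈ zpowers g) (hxg : x ∉ zpowers g) :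
    x ^ 2 = g ^ (orderOf g / 2) := by
  refine eq_pow_half_orderOf_of_sq_eq_one hx2 ?_ fun h => hxg (huniq x h)
  obtain ⟨t, ht⟩ := mem_zpowers_iff.mp hx2
  have hfix : g ^ (r * t) = g ^ t := by
    have hcomm : Commute x (g ^ t) := ht ▸ (Commute.refl x).pow_right 2
    rw [zpow_mul]
    exact mul_right_cancel ((hx.zpow_right t).eq.symm.trans hcomm.eq)
  have hdvd : (2 : ℤ) ^ m ∣ t - r * t := by
    simpa [hg] using (zpow_eq_zpow_iff_modEq.mp hfix).dvd
  obtain ⟨c, hc⟩ := hr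
  have hcop : IsCoprime ((2 : ℤ) ^ m) (1 - 2 * c) :=
    (show IsCoprime (2 : ℤ) (1 - 2 * c) from ⟨c, 1, by ring⟩).pow_left
  rw [← ht, ← zpow_natCast, ← zpow_mul, ← orderOf_dvd_iff_zpow_eq_one, hg]
  push_cast
  refine hcop.dvd_of_dvd_mul_right (y := t * 2) ?_
  rwa [show t * 2 * (1 - 2 * c) = t - r * t by linear_combination t * hc]

theorem semiconjBy_inv_and_sq_eq_of_not_commute (hg : orderOf g = 2 ^ m)
    (huniq : ∀ y : G, y ^ 2 = 1 → y ∈ zpowers g) (hx : SemiconjBy x g (g ^ r))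
    (hx2 : x ^ 2 ∈ zpowers g) (hxg : ¬ Commute x g) :
    SemiconjBy x g g⁻¹ ∧ x ^ 2 = g ^ (orderOf g / 2) := by
  have hr := (eq_two_and_four_dvd_of_not_commute Nat.prime_two hg huniq hx hx2 hxg).2
  have hxz : x ∉ zpowers g := by
    rintro ⟨i, rfl⟩
    exact hxg ((Commute.refl g).zpow_left i)
  have hsq := sq_eq_pow_half_orderOf_of_four_dvd hg huniq hx hr hx2 hxz
  have hgx : SemiconjBy (g * x) g (g ^ r) :=
    SemiconjBy.mul_left ((Commute.refl g).zpow_right r) hx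
  have hgx_sq : (g * x) ^ 2 = g ^ (1 + r) * x ^ 2 := by
    simpa [geom_sum_two, add_comm] using zpow_mul_pow_of_semiconjBy_zpow hx 1 2
  have hgx2 : (g * x) ^ 2 ∈ zpowers g :=
    hgx_sq ▸ mul_mem (zpow_mem (mem_zpowers g) _) hx2
  have hgxz : g * x ∉ zpowers g := (mul_mem_cancel_left (mem_zpowers g)).not.mpr hxz
  have heq := sq_eq_pow_half_orderOf_of_four_dvd hg huniq hgx hr hgx2 hgxz
  rw [hgx_sq, hsq, mul_eq_right, zpow_add, zpow_one] at heq
  exact ⟨eq_inv_of_mul_eq_one_right heq ▸ hx, hsq⟩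

theorem four_dvd_orderOf_of_semiconjBy_inv (hg : orderOf g = 2 ^ m) (hx : SemiconjBy x g g⁻¹)
    (hxg : ¬ Commute x g) : 4 ∣ orderOf g := by
  rw [hg]
  refine pow_dvd_pow 2 (n := m) (m := 2) (not_lt.mp fun hm => hxg ?_)
  have hg2 : g ^ 2 = 1 :=
    orderOf_dvd_iff_pow_eq_one.mp (hg ▸ pow_dvd_pow 2 (Nat.lt_succ_iff.mp hm))
  rwa [inv_eq_of_mul_eq_one_left (sq g ▸ hg2)] at hx

theorem not_sq_semiconjBy_inv (hg : 4 ∣ orderOf g) (hx : SemiconjBy x g (g ^ r)) :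
    ¬ SemiconjBy (x ^ 2) g g⁻¹ := by
  intro hinv
  have heq : g ^ r ^ 2 = g ^ (-1 : ℤ) := by
    rw [zpow_neg_one]
    exact mul_right_cancel ((pow_semiconjBy_zpow_pow hx 2).eq.symm.trans hinv.eq)
  have hmod : r ^ 2 ≡ -1 [ZMOD (4 : ℕ)] :=
    (zpow_eq_zpow_iff_modEq.mp heq).of_dvd (Int.natCast_dvd_natCast.mpr hg)
  obtain ⟨c, hc⟩ := hmod.dvd
  rcases Int.even_or_odd' r with ⟨b, rfl | rfl⟩ <;> ring_nf at hc <;> lia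

theorem exists_semiconjBy_zpow_of_normal [(zpowers g).Normal] (y : G) :
    ∃ r : ℤ, SemiconjBy y g (g ^ r) := by
  obtain ⟨r, hr⟩ := mem_zpowers_iff.mp
    (Normal.conj_mem (inferInstance : (zpowers g).Normal) g (mem_zpowers g) y)
  exact ⟨r, by rw [SemiconjBy, hr, inv_mul_cancel_right]⟩

theorem semiconjBy_inv_of_notMem_zpowers (hG : IsPGroup 2 G) [(zpowers g).Normal]
    (huniq : ∀ y : G, y ^ 2 = 1 → y ∈ zpowers g) (hC : ∀ y : G, Commute y g → y ∈ zpowers g)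
    {y : G} (hy : y ∉ zpowers g) : SemiconjBy y g g⁻¹ := by
  obtain ⟨m, hm⟩ := IsPGroup.iff_orderOf.mp hG g
  obtain ⟨k, hyk, hyk2⟩ := exists_pow_prime_pow_notMem_and_mem hG hy
  rw [pow_succ, pow_mul] at hyk2
  have hncomm : ¬ Commute (y ^ 2 ^ k) g := mt (hC _) hyk
  obtain ⟨r, hr⟩ := exists_semiconjBy_zpow_of_normal (g := g) (y ^ 2 ^ k)
  have hinv := (semiconjBy_inv_and_sq_eq_of_not_commute hm huniq hr hyk2 hncomm).1
  cases k with
  | zero => simpa using hinv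
  | succ k =>
    have h4 := four_dvd_orderOf_of_semiconjBy_inv hm hinv hncomm
    obtain ⟨s, hs⟩ := exists_semiconjBy_zpow_of_normal (g := g) (y ^ 2 ^ k)
    rw [pow_succ, pow_mul] at hinv
    exact absurd hinv (not_sq_semiconjBy_inv h4 hs)

end CyclicExtension

section Quaternion

variable {G : Type*} [Group G] {n : ℕ} {g x : G}

theorem zpow_eq_zpow_of_intCast_eq {N : ℕ} (hg : g ^ N = 1) {i j : ℤ}
    (hij : (i : ZMod N) = j) : g ^ i = g ^ j :=
  zpow_eq_zpow_iff_modEq.mpr (((ZMod.intCast_eq_intCast_iff i j N).mp hij).of_dvd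
    (Int.natCast_dvd_natCast.mpr (orderOf_dvd_of_pow_eq_one hg)))

/-- The homomorphism out of the dicyclic group sending the generators `QuaternionGroup.a 1` and
`QuaternionGroup.xa 0` to elements `g` and `x` that satisfy the defining relations. The exponents
are integer representatives of elements of `ZMod (2 * n)`. -/
def quaternionGroupLift (hg : g ^ (2 * n) = 1) (hxg : SemiconjBy x g g⁻¹) (hx : x ^ 2 = g ^ n) :
    QuaternionGroup n →* G :=
  MonoidHom.mk' (fun
      | .a i => g ^ (i.cast : ℤ)
      | .xa i => x * g ^ (i.cast : ℤ)) <| by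
    have hmove (i : ℤ) : g ^ i * x = x * g ^ (-i) := by
      rw [(hxg.zpow_right (-i)).eq, inv_zpow', neg_neg]
    rintro (i | i) (j | j)
    · simp only [QuaternionGroup.a_mul_a, ← zpow_add]
      exact zpow_eq_zpow_of_intCast_eq hg (by simp)
    · simp only [QuaternionGroup.a_mul_xa]
      rw [← mul_assoc, hmove, mul_assoc, ← zpow_add, mul_right_inj]
      exact zpow_eq_zpow_of_intCast_eq hg (by simp [sub_eq_neg_add])
    · simp only [QuaternionGroup.xa_mul_a]
      rw [mul_assoc, ← zpow_add, mul_right_inj]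
      exact zpow_eq_zpow_of_intCast_eq hg (by simp)
    · simp only [QuaternionGroup.xa_mul_xa]
      rw [mul_assoc, ← mul_assoc _ x, hmove, ← mul_assoc, ← mul_assoc, ← sq, hx, ← zpow_natCast,
        ← zpow_add, ← zpow_add]
      exact zpow_eq_zpow_of_intCast_eq hg (by push_cast [ZMod.intCast_zmod_cast]; ring)

theorem quaternionGroupLift_injective (hg : orderOf g = 2 * n) (hxg : SemiconjBy x g g⁻¹)
    (hx : x ^ 2 = g ^ n) (hxz : x ∉ zpowers g) :
    Function.Injective (quaternionGroupLift (hg ▸ pow_orderOf_eq_one g) hxg hx) := by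
  rw [injective_iff_map_eq_one]
  rintro (i | i) hi
  · change g ^ (i.cast : ℤ) = 1 at hi
    rw [← orderOf_dvd_iff_zpow_eq_one, hg, ← ZMod.intCast_zmod_eq_zero_iff_dvd,
      ZMod.intCast_zmod_cast] at hi
    rw [hi, QuaternionGroup.a_zero]
  · refine absurd ?_ hxz
    rw [eq_inv_of_mul_eq_one_left (show x * g ^ (i.cast : ℤ) = 1 from hi)]
    exact inv_mem (zpow_mem (mem_zpowers g) _)

theorem quaternionGroupLift_surjective (hg : g ^ (2 * n) = 1) (hxg : SemiconjBy x g g⁻¹)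
    (hx : x ^ 2 = g ^ n) (hG : ∀ y : G, y ∈ zpowers g ∨ x⁻¹ * y ∈ zpowers g) :
    Function.Surjective (quaternionGroupLift hg hxg hx) := by
  have hcast (i : ℤ) : g ^ (((i : ZMod (2 * n)).cast : ℤ)) = g ^ i :=
    zpow_eq_zpow_of_intCast_eq hg (ZMod.intCast_zmod_cast _)
  intro y
  rcases hG y with ⟨i, hi⟩ | ⟨i, hi⟩
  · exact ⟨.a i, (hcast i).trans hi⟩
  · exact ⟨.xa i, (congrArg (x * ·) ((hcast i).trans hi)).trans (mul_inv_cancel_left x y)⟩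

theorem isGeneralizedQuaternion_of_orderOf_eq_two_pow {m : ℕ} (hm : 2 ≤ m)
    (hg : orderOf g = 2 ^ m) (hxg : SemiconjBy x g g⁻¹) (hx : x ^ 2 = g ^ (orderOf g / 2))
    (hxz : x ∉ zpowers g) (hG : ∀ y : G, y ∈ zpowers g ∨ x⁻¹ * y ∈ zpowers g) :
    IsGeneralizedQuaternion G := by
  obtain ⟨l, rfl⟩ := Nat.exists_eq_add_of_le' hm
  have hg2 : orderOf g = 2 * 2 ^ (l + 1) := hg.trans (pow_succ' 2 (l + 1))
  rw [hg2, Nat.mul_div_cancel_left _ two_pos] at hx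
  exact ⟨l + 3, by lia, ⟨(MulEquiv.ofBijective (quaternionGroupLift _ hxg hx)
    ⟨quaternionGroupLift_injective hg2 hxg hx hxz,
      quaternionGroupLift_surjective _ hxg hx hG⟩).symm⟩⟩

theorem isGeneralizedQuaternion_of_notMem_zpowers {p : ℕ} [Fact p.Prime] (hG : IsPGroup p G)
    [(zpowers g).Normal] (huniq : ∀ y : G, y ^ p = 1 → y ∈ zpowers g)
    (hC : ∀ y : G, Commute y g → y ∈ zpowers g) {y : G} (hy : y ∉ zpowers g) :
    IsGeneralizedQuaternion G := by
  obtain ⟨m, hm⟩ := IsPGroup.iff_orderOf.mp hG g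
  obtain ⟨k, hxz, hxp⟩ := exists_pow_prime_pow_notMem_and_mem hG hy
  rw [pow_succ, pow_mul] at hxp
  generalize y ^ p ^ k = x at hxz hxp
  have hncomm : ¬ Commute x g := mt (hC x) hxz
  obtain ⟨r, hr⟩ := exists_semiconjBy_zpow_of_normal (g := g) x
  obtain rfl : p = 2 := (eq_two_and_four_dvd_of_not_commute Fact.out hm huniq hr hxp hncomm).1
  obtain ⟨hinv, hsq⟩ := semiconjBy_inv_and_sq_eq_of_not_commute hm huniq hr hxp hncomm
  have h4 : 2 ^ 2 ∣ 2 ^ m := hm ▸ four_dvd_orderOf_of_semiconjBy_inv hm hinv hncomm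
  refine isGeneralizedQuaternion_of_orderOf_eq_two_pow
    ((Nat.pow_dvd_pow_iff_le_right one_lt_two).mp h4) hm hinv hsq hxz fun z =>
    or_iff_not_imp_left.mpr fun hz => hC _ ?_
  exact hinv.inv_symm_left.mul_left (semiconjBy_inv_of_notMem_zpowers hG huniq hC hz)

theorem isCyclic_or_isGeneralizedQuaternion_of_subsingleton_card_eq_prime [Finite G] {p : ℕ}
    [Fact p.Prime] (hG : IsPGroup p G)
    (huniq : {K : Subgroup G | Nat.card K = p}.Subsingleton) :
    IsCyclic G ∨ IsGeneralizedQuaternion G := by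
  have : Group.IsNilpotent G := hG.isNilpotent
  obtain ⟨A, -, hA⟩ := (Set.toFinite
    {B : Subgroup G | B.Normal ∧ IsMulCommutative B}).exists_le_maximal
      (a := ⊥) ⟨inferInstance, inferInstance⟩
  obtain ⟨hAn, hAc⟩ := hA.prop
  have hcyc : IsCyclic A := by
    refine isCyclic_of_isMulCommutative_of_subsingleton_card_eq_prime (hG.to_subgroup A) ?_
    exact fun K hK L hL => map_injective A.subtype_injective (huniq
      ((card_map_of_injective A.subtype_injective).trans hK)
      ((card_map_of_injective A.subtype_injective).trans hL))
  obtain ⟨g, rfl⟩ := A.isCyclic_iff_exists_zpowers_eq_top.mp hcyc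
  have hC (y : G) (hy : Commute y g) : y ∈ zpowers g := by
    refine centralizer_le_of_maximal_normal_isMulCommutative hA (mem_centralizer_iff.mpr ?_)
    rintro _ ⟨i, rfl⟩
    exact (hy.zpow_right i).eq.symm
  by_cases hgen : ∀ y, y ∈ zpowers g
  · exact .inl ⟨g, hgen⟩
  · obtain ⟨y, hy⟩ := not_forall.mp hgen
    have hg : g ≠ 1 := by
      rintro rfl
      exact hy (hC y (Commute.one_right y))
    exact .inr (isGeneralizedQuaternion_of_notMem_zpowers hG
      (fun _ => mem_zpowers_of_pow_prime_eq_one hG huniq hg) hC hy)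

theorem exists_orderOf_eq_four_not_commute_quaternionGroup (hn : 2 ≤ n) :
    ∃ x y : QuaternionGroup n, orderOf x = 4 ∧ orderOf y = 4 ∧ ¬ Commute x y := by
  have : NeZero n := ⟨by lia⟩
  refine ⟨.xa 0, .xa 1, QuaternionGroup.orderOf_xa 0, QuaternionGroup.orderOf_xa 1, fun h => ?_⟩
  have hcomm := h.eq
  simp only [QuaternionGroup.xa_mul_xa, QuaternionGroup.a.injEq] at hcomm
  have htwo : ((2 : ℕ) : ZMod (2 * n)) = 0 := by
    push_cast
    linear_combination hcomm
  have hle := Nat.le_of_dvd two_pos ((ZMod.natCast_eq_zero_iff _ _).mp htwo)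
  lia

theorem exists_orderOf_eq_four_not_commute (hG : IsGeneralizedQuaternion G) :
    ∃ x y : G, orderOf x = 4 ∧ orderOf y = 4 ∧ ¬ Commute x y := by
  obtain ⟨l, hl, ⟨e⟩⟩ := hG
  obtain ⟨x, y, hx, hy, hxy⟩ := exists_orderOf_eq_four_not_commute_quaternionGroup
    (n := 2 ^ (l - 2)) (Nat.le_self_pow (by lia) 2)
  exact ⟨e.symm x, e.symm y, (e.symm.orderOf_eq x).trans hx, (e.symm.orderOf_eq y).trans hy,
    fun h => hxy (by simpa using h.map e)⟩

end Quaternion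

section UniqueSubgroup

variable {G : Type*} [Group G] [Finite G]

theorem eq_of_card_eq_of_isCyclic [IsCyclic G] {K L : Subgroup G}
    (hcard : Nat.card K = Nat.card L) : K = L := by
  classical
  have := Fintype.ofFinite G
  have hfilter (M : Subgroup G) :
      (M : Set G).toFinset = Finset.univ.filter (· ^ Nat.card M = 1) := by
    refine Finset.eq_of_subset_of_card_le (fun a ha => ?_) ?_
    · have hdvd : orderOf a ∣ Nat.card M := M.orderOf_dvd_natCard (by simpa using ha)
      simpa using orderOf_dvd_iff_pow_eq_one.mp hdvd
    · simpa [Set.toFinset_card] using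
        IsCyclic.card_pow_eq_one_le (α := G) (Nat.card_pos (α := M))
  have heq : (K : Set G).toFinset = (L : Set G).toFinset := by rw [hfilter K, hfilter L, hcard]
  exact SetLike.coe_injective (Set.toFinset_inj.mp heq)

variable {p k : ℕ} [Fact p.Prime] {H : Subgroup G}

theorem le_of_unique_card (hH : Nat.card H = p ^ k)
    (huniq : ∀ K : Subgroup G, Nat.card K = p ^ k → K = H) {K : Subgroup G} {j : ℕ}
    (hK : Nat.card K = p ^ j) (hjk : j ≤ k) : K ≤ H := by
  obtain ⟨L, hL, hKL⟩ := Sylow.exists_subgroup_card_pow_prime_le p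
    (hH ▸ card_subgroup_dvd_card H) K hK hjk
  exact huniq L hL ▸ hKL

theorem isCyclic_of_unique_card (hG : IsPGroup p G) (hH : Nat.card H = p ^ k)
    (huniq : ∀ K : Subgroup G, Nat.card K = p ^ k → K = H) (htop : H ≠ ⊤) : IsCyclic H := by
  have hp : p.Prime := Fact.out
  obtain ⟨x, hx⟩ : ∃ x, x ∉ H := not_forall.mp (mt H.eq_top_iff'.mpr htop)
  obtain ⟨j, hj⟩ := IsPGroup.iff_orderOf.mp hG x
  rw [← Nat.card_zpowers] at hj
  have hkj : k ≤ j := by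
    by_contra! hjk
    exact hx (le_of_unique_card hH huniq hj hjk.le (mem_zpowers x))
  obtain ⟨K, hKx, hK⟩ := Sylow.exists_subgroup_le_card_pow_prime_of_le_card hp hG
    (hj ▸ Nat.pow_le_pow_right hp.pos hkj)
  exact Subgroup.isCyclic_of_le (huniq K hK ▸ hKx)

theorem subsingleton_card_eq_prime_of_unique_card (hG : IsPGroup p G) (hH : Nat.card H = p ^ k)
    (huniq : ∀ K : Subgroup G, Nat.card K = p ^ k → K = H) (htop : H ≠ ⊤) (hk : 0 < k) :
    {K : Subgroup G | Nat.card K = p}.Subsingleton := by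
  have := isCyclic_of_unique_card hG hH huniq htop
  have hle {K : Subgroup G} (hK : Nat.card K = p) : K ≤ H :=
    le_of_unique_card hH huniq (hK.trans (pow_one p).symm) hk
  have hcard {K : Subgroup G} (hK : Nat.card K = p) : Nat.card (K.subgroupOf H) = p :=
    (Nat.card_congr (subgroupOfEquivOfLe (hle hK)).toEquiv).trans hK
  intro K hK L hL
  rw [← map_subgroupOf_eq_of_le (hle hK), ← map_subgroupOf_eq_of_le (hle hL),
    eq_of_card_eq_of_isCyclic ((hcard hK).trans (hcard hL).symm)]

end UniqueSubgroup

theorem pow_eq_two_of_isGeneralizedQuaternion {G : Type*} [Group G] [Finite G] {p k : ℕ}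
    [Fact p.Prime] {H : Subgroup G} (hG : IsPGroup p G) (hH : Nat.card H = p ^ k)
    (huniq : ∀ K : Subgroup G, Nat.card K = p ^ k → K = H) (htop : H ≠ ⊤) (hk : 0 < k)
    (hquat : IsGeneralizedQuaternion G) : p ^ k = 2 := by
  obtain ⟨x, y, hx, hy, hxy⟩ := exists_orderOf_eq_four_not_commute hquat
  obtain rfl : p = 2 := by
    obtain ⟨j, hj⟩ := IsPGroup.iff_orderOf.mp hG x
    have hdvd : 2 ∣ p ^ j := hj ▸ hx ▸ ⟨2, rfl⟩
    exact ((Nat.prime_dvd_prime_iff_eq Nat.prime_two Fact.out).mp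
      (Nat.prime_two.dvd_of_dvd_pow hdvd)).symm
  have hcyc := isCyclic_of_unique_card hG hH huniq htop
  suffices hk2 : ¬ 2 ≤ k by rw [show k = 1 by lia, pow_one]
  intro hk2
  have hmem {z : G} (hz : orderOf z = 2 ^ 2) : z ∈ H :=
    le_of_unique_card hH huniq ((Nat.card_zpowers z).trans hz) hk2 (mem_zpowers z)
  exact hxy (setLike_mul_comm (hmem hx) (hmem hy))

theorem cyclic_or_generalized_quaternion_of_unique_subgroup {Q : Type*} [Group Q]
    {p n k : ℕ} (hp : p.Prime) (hcard : Nat.card Q = p ^ n) (h0k : 0 < k) (hkn : k < n)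
    (huniq : ∃! H : Subgroup Q, Nat.card H = p ^ k) :
    (IsCyclic Q ∨ IsGeneralizedQuaternion Q) ∧
      (IsGeneralizedQuaternion Q → ¬IsCyclic Q → p ^ k = 2) := by
  have : Fact p.Prime := ⟨hp⟩
  have : Finite Q := Nat.finite_of_card_ne_zero (hcard ▸ pow_ne_zero n hp.ne_zero)
  have hQ : IsPGroup p Q := IsPGroup.of_card hcard
  obtain ⟨H, hH, huniq⟩ := huniq
  have htop : H ≠ ⊤ := by
    rintro rfl
    exact hkn.ne (Nat.pow_right_injective hp.two_le (hH.symm.trans (card_top.trans hcard)))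
  exact ⟨isCyclic_or_isGeneralizedQuaternion_of_subsingleton_card_eq_prime hQ
      (subsingleton_card_eq_prime_of_unique_card hQ hH huniq htop h0k),
    fun hquat _ => pow_eq_two_of_isGeneralizedQuaternion hQ hH huniq htop h0k hquat⟩
end
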